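/- (Main dictatorship theorem.) Suppose |A| ≥ 3 and the type domain 𝒰 = ∏_{i=1}^n U_i satisfies: (C1) for each agent i, U_i contains an unrestricted parallel domain, and (C2) for at least n−1 agents, U_i contains a type that is not parallel. Then every social choice mechanism on 𝒰 that is DSIC, deterministic, onto, IR and satisfies no subsidy is a fixed price dictatorship: there exist an agent i* and fixed prices z ∈ ℝ^A such that for every u ∈ 𝒰, x(u) ∈ argmax_{a∈A} u_{i*,a}(z_a) and t_{i*}(u) = z_{x(u)}. -/

import Mathlib

/-!
Common framework: agents indexed by `I`, alternatives `A` (finite, nonempty).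
A type of an agent is a family `u : A → ℝ → ℝ`, where `u a z` is the utility
when alternative `a` is selected and the agent pays `z`.
-/

noncomputable section

namespace NQLSC

/-- A type (utility family) of an agent. -/
abbrev Util (A : Type*) := A → ℝ → ℝ

variable {A I : Type*}

/-- (S1): each `u a` is continuous and strictly decreasing in the payment. -/
def S1 (u : Util A) : Prop := ∀ a, Continuous (u a) ∧ StrictAnti (u a)

/-- `min_{a'∈A} u_{a'}(0)`, the value of the worst alternative at zero payment. -/
def minVal [Fintype A] [Nonempty A] (u : Util A) : ℝ :=
  Finset.univ.inf' Finset.univ_nonempty (fun a => u a 0)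

/-- (S2): as the payment tends to `+∞`, the utility of every alternative drops
(strictly) below `min_{a'} u_{a'}(0)`; for strictly decreasing utilities this is
equivalent to the utility being below that value at some payment. -/
def S2 [Fintype A] [Nonempty A] (u : Util A) : Prop :=
  ∀ a, ∃ z : ℝ, u a z < minVal u

/-- The willingness to pay `p_a = u_a⁻¹(min_{a'} u_{a'}(0))` (under (S1),(S2) this
`sInf` is the unique payment at which `u a` attains `minVal u`). -/
def wtp [Fintype A] [Nonempty A] (u : Util A) (a : A) : ℝ :=
  sInf {z : ℝ | u a z ≤ minVal u}

/-- A parallel type: (S1), (S2), and for all `a, b` with `v_a ≥ v_b` and all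
`z ∈ [0, p_b]`, `u_a (z + (p_a − p_b)) = u_b z`. -/
def IsParallel [Fintype A] [Nonempty A] (u : Util A) : Prop :=
  S1 u ∧ S2 u ∧ ∀ a b : A, u b 0 ≤ u a 0 → ∀ z : ℝ, 0 ≤ z → z ≤ wtp u b →
    u a (z + (wtp u a - wtp u b)) = u b z

/-- Unrestricted willingness to pay: every nonnegative vector with a zero entry is
the willingness-to-pay vector of some type in the domain. -/
def UnrestrictedWTP [Fintype A] [Nonempty A] (U : Set (Util A)) : Prop :=
  ∀ lam : A → ℝ, (∀ a, 0 ≤ lam a) → (∃ a, lam a = 0) →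
    ∃ u ∈ U, ∀ a, wtp u a = lam a

/-- Dominant-strategy incentive compatibility of a (deterministic) mechanism `(x,t)`
on the domain `𝒰 = ∏ i, U i`. -/
def DSIC [DecidableEq I] (U : I → Set (Util A)) (x : (I → Util A) → A)
    (t : (I → Util A) → I → ℝ) : Prop :=
  ∀ uh : I → Util A, (∀ j, uh j ∈ U j) → ∀ i, ∀ ui ∈ U i,
    ui (x uh) (t uh i) ≤
      ui (x (Function.update uh i ui)) (t (Function.update uh i ui) i)

/-- Individual rationality. -/
def IR [Fintype A] [Nonempty A] [DecidableEq I] (U : I → Set (Util A))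
    (x : (I → Util A) → A) (t : (I → Util A) → I → ℝ) : Prop :=
  ∀ uh : I → Util A, (∀ j, uh j ∈ U j) → ∀ i, ∀ ui ∈ U i,
    minVal ui ≤ ui (x (Function.update uh i ui)) (t (Function.update uh i ui) i)

/-- No subsidy: the mechanism never makes positive transfers to an agent. -/
def NoSubsidy (U : I → Set (Util A)) (t : (I → Util A) → I → ℝ) : Prop :=
  ∀ u : I → Util A, (∀ j, u j ∈ U j) → ∀ i, 0 ≤ t u i

/-- Ontoness of the choice rule on the given domain. -/
def OntoMech (U : I → Set (Util A)) (x : (I → Util A) → A) : Prop :=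
  ∀ a, ∃ u : I → Util A, (∀ j, u j ∈ U j) ∧ x u = a

/-! ### Roberts' theorem -/

/-- Positive association of differences for a choice rule on quasi-linear value profiles. -/
def PAD (f : (I → A → ℝ) → A) : Prop :=
  ∀ v w a, f v = a → (∀ i b, b ≠ a → w i b - v i b < w i a - v i a) → f w = a

/-- Vectors strictly above some difference `v x - v y` over the profiles `v` where `x` is chosen. -/
def diffSet (f : (I → A → ℝ) → A) (x y : A) : Set (I → ℝ) :=
  {β | ∃ v, f v = x ∧ ∀ i, v i x - v i y < β i}

theorem PAD.ne_of_diff_lt {f : (I → A → ℝ) → A} (hf : PAD f) {x y : A} (hxy : x ≠ y)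
    {v w : I → A → ℝ} (hv : f v = x) (h : ∀ i, v i x - v i y < w i x - w i y) : f w ≠ y := by
  classical
  intro hw
  let m : I → ℝ := fun i => ((v i x - v i y) + (w i x - w i y)) / 2
  let s : I → A → ℝ := fun i b => if b = x then m i else if b = y then 0 else
    min (m i + v i b - v i x) (w i b - w i y) - 1
  have hsx : ∀ i, s i x = m i := fun i => by simp [s]
  have hsy : ∀ i, s i y = 0 := fun i => by simp [s, hxy.symm]
  have hsb : ∀ i b, b ≠ x → b ≠ y →
      s i b = min (m i + v i b - v i x) (w i b - w i y) - 1 := fun i b h1 h2 => by simp [s, h1, h2]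
  have h1 : f s = x := by
    refine hf v s x hv fun i b hb => ?_
    have hi := h i
    rw [hsx]
    by_cases hby : b = y
    · rw [hby, hsy]; simp only [m]; linarith
    · rw [hsb i b hb hby]
      have := min_le_left (m i + v i b - v i x) (w i b - w i y)
      linarith
  have h2 : f s = y := by
    refine hf w s y hw fun i b hb => ?_
    have hi := h i
    rw [hsy]
    by_cases hbx : b = x
    · rw [hbx, hsx]; simp only [m]; linarith
    · rw [hsb i b hbx hb]
      have := min_le_right (m i + v i b - v i x) (w i b - w i y)
      linarith
  exact hxy (h1.symm.trans h2)

theorem PAD.ne_of_mem_diffSet {f : (I → A → ℝ) → A} (hf : PAD f) {x y : A} (hxy : x ≠ y)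
    {β : I → ℝ} (hβ : β ∈ diffSet f x y) {w : I → A → ℝ} (h : ∀ i, β i ≤ w i x - w i y) :
    f w ≠ y := by
  obtain ⟨v, hv, hlt⟩ := hβ
  exact hf.ne_of_diff_lt hxy hv fun i => (hlt i).trans_le (h i)

theorem diffSet_mono {f : (I → A → ℝ) → A} {x y : A} {α β : I → ℝ} (hα : α ∈ diffSet f x y)
    (h : ∀ i, α i ≤ β i) : β ∈ diffSet f x y := by
  obtain ⟨v, hv, hlt⟩ := hα
  exact ⟨v, hv, fun i => (hlt i).trans_le (h i)⟩

theorem exists_pos_forall_lt_sub [Finite I] {d β : I → ℝ} (h : ∀ i, d i < β i) :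
    ∃ ε > 0, ∀ i, d i < β i - ε := by
  have h1 : ∀ᶠ ε in nhdsWithin (0 : ℝ) (Set.Ioi 0), ∀ i, d i < β i - ε := by
    refine Filter.eventually_all.2 fun i => nhdsWithin_le_nhds ?_
    exact (by fun_prop : Continuous fun ε : ℝ => β i - ε).continuousAt.eventually
      (lt_mem_nhds (by simpa using h i))
  obtain ⟨ε, h2, h3⟩ := (h1.and self_mem_nhdsWithin).exists
  exact ⟨ε, h3, h2⟩

theorem exists_sub_mem_diffSet [Finite I] {f : (I → A → ℝ) → A} {x y : A} {α : I → ℝ}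
    (hα : α ∈ diffSet f x y) : ∃ ε > 0, (fun i => α i - ε) ∈ diffSet f x y := by
  obtain ⟨v, hv, hlt⟩ := hα
  obtain ⟨ε, hε, h⟩ := exists_pos_forall_lt_sub hlt
  exact ⟨ε, hε, v, hv, h⟩

theorem diffSet_nonempty {f : (I → A → ℝ) → A} (hs : Function.Surjective f) (x y : A) :
    ∃ β, β ∈ diffSet f x y := by
  obtain ⟨v, hv⟩ := hs x
  exact ⟨fun i => v i x - v i y + 1, v, hv, fun i => by linarith⟩

theorem PAD.neg_add_mem_diffSet {f : (I → A → ℝ) → A} (hf : PAD f) (hs : Function.Surjective f)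
    {x y : A} (hxy : x ≠ y) {β : I → ℝ} (hβ : β ∉ diffSet f x y) {ε : ℝ} (hε : 0 < ε) :
    (fun i => -β i + ε) ∈ diffSet f y x := by
  classical
  choose B hB using fun z => diffSet_nonempty hs x z
  let v : I → A → ℝ := fun i b => if b = x then β i - ε / 2 else if b = y then 0 else
    β i - ε / 2 - B b i
  have hvx : ∀ i, v i x = β i - ε / 2 := fun i => by simp [v]
  have hvy : ∀ i, v i y = 0 := fun i => by simp [v, hxy.symm]
  have hvb : ∀ i b, b ≠ x → b ≠ y → v i b = β i - ε / 2 - B b i :=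
    fun i b h1 h2 => by simp [v, h1, h2]
  have hne : f v ≠ x := fun h => hβ ⟨v, h, fun i => by rw [hvx, hvy]; linarith⟩
  have hfy : f v = y := by
    by_contra hy
    refine hf.ne_of_mem_diffSet (y := f v) (w := v) (Ne.symm hne) (hB (f v)) (fun i => ?_) rfl
    rw [hvx, hvb i _ hne hy]; linarith
  exact ⟨v, hfy, fun i => by rw [hvx, hvy]; linarith⟩

theorem PAD.add_mem_diffSet [Finite I] {f : (I → A → ℝ) → A} (hf : PAD f)
    (hs : Function.Surjective f) {x y z : A} (hxy : x ≠ y) (hyz : y ≠ z) (hxz : x ≠ z)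
    {α β : I → ℝ} (hα : α ∈ diffSet f x y) (hβ : β ∈ diffSet f y z) :
    (fun i => α i + β i) ∈ diffSet f x z := by
  classical
  obtain ⟨ε, hε, hα⟩ := exists_sub_mem_diffSet hα
  choose B hB using fun z => diffSet_nonempty hs x z
  let v : I → A → ℝ := fun i b => if b = x then α i - ε else if b = y then 0 else
    if b = z then - β i else α i - ε - B b i
  have hvx : ∀ i, v i x = α i - ε := fun i => by simp [v]
  have hvy : ∀ i, v i y = 0 := fun i => by simp [v, hxy.symm]
  have hvz : ∀ i, v i z = - β i := fun i => by simp [v, hxz.symm, hyz.symm]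
  have hvb : ∀ i b, b ≠ x → b ≠ y → b ≠ z → v i b = α i - ε - B b i :=
    fun i b h1 h2 h3 => by simp [v, h1, h2, h3]
  have h1 : f v ≠ y := hf.ne_of_mem_diffSet hxy hα fun i => by rw [hvx, hvy]; linarith
  have h2 : f v ≠ z := hf.ne_of_mem_diffSet hyz hβ fun i => by rw [hvz, hvy]; linarith
  have h3 : f v = x := by
    by_contra hx
    refine hf.ne_of_mem_diffSet (y := f v) (w := v) (Ne.symm hx) (hB (f v)) (fun i => ?_) rfl
    rw [hvx, hvb i _ hx h1 h2]; linarith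
  exact ⟨v, h3, fun i => by rw [hvx, hvz]; linarith⟩

theorem PAD.exists_threshold [Finite I] [Nonempty I] {f : (I → A → ℝ) → A} (hf : PAD f)
    (hs : Function.Surjective f) {x y : A} (hxy : x ≠ y) :
    ∃ g : ℝ, ∀ r : ℝ, (fun _ => r) ∈ diffSet f x y ↔ g < r := by
  let S : Set ℝ := {r | (fun _ => r) ∈ diffSet f x y}
  have hne : S.Nonempty := by
    obtain ⟨β, hβ⟩ := diffSet_nonempty hs x y
    obtain ⟨r, hr⟩ := (Set.finite_range β).bddAbove
    exact ⟨r, diffSet_mono hβ fun i => hr ⟨i, rfl⟩⟩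
  have hbdd : BddBelow S := by
    obtain ⟨v, hv⟩ := hs y
    obtain ⟨r, hr⟩ := (Set.finite_range fun i => v i x - v i y).bddBelow
    refine ⟨r, fun s hsS => ?_⟩
    by_contra! hlt
    exact hf.ne_of_mem_diffSet hxy hsS (w := v) (fun i => hlt.le.trans (hr ⟨i, rfl⟩)) hv
  refine ⟨sInf S, fun r => ⟨fun hr => ?_, fun hr => ?_⟩⟩
  · obtain ⟨ε, hε, h⟩ := exists_sub_mem_diffSet hr
    have : sInf S ≤ r - ε := csInf_le hbdd h
    linarith
  · obtain ⟨s, hsS, hsr⟩ := exists_lt_of_csInf_lt hne hr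
    exact diffSet_mono (f := f) hsS fun _ => hsr.le

/-- An open upward-closed additive set that together with its reflection almost exhausts the
space lies in an open half-space with nonnegative normal. -/
theorem exists_nonneg_functional [Fintype I] (E : Set (I → ℝ))
    (hup : ∀ α ∈ E, ∀ β : I → ℝ, (∀ i, α i ≤ β i) → β ∈ E)
    (hshrink : ∀ α ∈ E, ∃ ε > 0, (fun i => α i - ε) ∈ E)
    (hadd : ∀ α ∈ E, ∀ β ∈ E, (fun i => α i + β i) ∈ E)
    (hdual : ∀ α, α ∉ E → ∀ ε > 0, (fun i => -α i + ε) ∈ E)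
    (hconst : ∀ r : ℝ, (fun _ => r) ∈ E ↔ 0 < r) :
    ∃ k : I → ℝ, (∀ i, 0 ≤ k i) ∧ ∀ α ∈ E, 0 < ∑ i, k i * α i := by
  classical
  have hnat : ∀ (n : ℕ) (α : I → ℝ), α ∈ E → (fun i => ((n : ℝ) + 1) * α i) ∈ E := by
    intro n α hα
    induction n with
    | zero => simpa using hα
    | succ n ih =>
      convert hadd _ ih _ hα using 2
      push_cast; ring
  have hdiv : ∀ (n : ℕ) (α : I → ℝ), α ∈ E → (fun i => α i / ((n : ℝ) + 1)) ∈ E := by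
    intro n α hα
    by_contra hn
    obtain ⟨ε, hε, hαε⟩ := hshrink α hα
    have hn0 : (0 : ℝ) < (n : ℝ) + 1 := by positivity
    have h1 := hnat n _ (hdual _ hn (ε / ((n : ℝ) + 1)) (by positivity))
    have h2 := hadd _ h1 _ hαε
    have h3 : (fun _ : I => (0 : ℝ)) ∈ E := by
      convert h2 using 2
      field_simp; ring
    exact lt_irrefl _ ((hconst 0).1 h3)
  have hrat : ∀ (q : ℚ), 0 < q → ∀ α ∈ E, (fun i => (q : ℝ) * α i) ∈ E := by
    intro q hq α hα
    have hnum : 0 < q.num := Rat.num_pos.2 hq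
    have h := hnat (q.num.toNat - 1) _ (hdiv (q.den - 1) α hα)
    have hd : (((q.den - 1 : ℕ) : ℝ) + 1) = q.den := by
      have := q.den_pos
      exact_mod_cast Nat.sub_add_cancel this
    have hn : (((q.num.toNat - 1 : ℕ) : ℝ) + 1) = q.num := by
      have h1 : (q.num.toNat - 1) + 1 = q.num.toNat := by omega
      have h2 : ((q.num.toNat : ℤ)) = q.num := by omega
      rw [← h2]; push_cast; exact_mod_cast h1
    rw [hd, hn] at h
    convert h using 2
    conv_lhs => rw [Rat.cast_def]
    ring
  have hsmul : ∀ c : ℝ, 0 < c → ∀ α ∈ E, (fun i => c * α i) ∈ E := by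
    intro c hc α hα
    obtain ⟨ε, hε, hαε⟩ := hshrink α hα
    have hev : ∀ᶠ q in nhds c, 0 < q ∧ ∀ i, q * (α i - ε) < c * α i := by
      refine (lt_mem_nhds hc).and (Filter.eventually_all.2 fun i => ?_)
      exact (by fun_prop : Continuous fun q : ℝ => q * (α i - ε)).continuousAt.eventually
        (gt_mem_nhds (by nlinarith))
    obtain ⟨q, hq0, hq⟩ := Rat.denseRange_cast.exists_mem_open isOpen_interior
      ⟨c, mem_interior_iff_mem_nhds.2 hev⟩ |>.imp fun q hq => interior_subset hq
    exact hup _ (hrat q (by exact_mod_cast hq0) _ hαε) _ fun i => (hq i).le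
  have hconv : Convex ℝ E := by
    refine convex_iff_forall_pos.2 fun α hα β hβ a b ha hb _ => ?_
    exact hadd _ (hsmul a ha α hα) _ (hsmul b hb β hβ)
  have hopen : IsOpen E := by
    rw [isOpen_iff_mem_nhds]
    intro α hα
    obtain ⟨ε, hε, hαε⟩ := hshrink α hα
    have hev : ∀ᶠ β in nhds α, ∀ i, α i - ε < β i :=
      Filter.eventually_all.2 fun i =>
        (continuous_apply i).continuousAt.eventually (lt_mem_nhds (by linarith))
    filter_upwards [hev] with β hβ
    exact hup _ hαε β fun i => (hβ i).le
  have h0 : (0 : I → ℝ) ∉ E := fun h => lt_irrefl _ ((hconst 0).1 h)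
  obtain ⟨φ, hφ⟩ := geometric_hahn_banach_open_point hconv hopen h0
  have hsum : ∀ α : I → ℝ, φ α = ∑ i, φ (Pi.single i 1) * α i := by
    intro α
    conv_lhs => rw [pi_eq_sum_univ' α]
    rw [map_sum]
    refine Finset.sum_congr rfl fun i _ => ?_
    rw [map_smul, smul_eq_mul, mul_comm]
  have hpos : ∀ α ∈ E, 0 < ∑ i, -φ (Pi.single i 1) * α i := by
    intro α hα
    have := hφ α hα
    rw [map_zero, hsum] at this
    simpa [Finset.sum_neg_distrib] using this
  refine ⟨fun i => -φ (Pi.single i 1), fun i => ?_, hpos⟩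
  by_contra! hneg
  have hone : (fun _ : I => (1 : ℝ)) ∈ E := (hconst 1).2 one_pos
  have hφ1 := hφ _ hone
  set d := φ (Pi.single i 1) with hd
  have hd0 : 0 < d := by linarith
  set e := φ (fun _ : I => (1 : ℝ)) with he
  rw [map_zero] at hφ1
  have hmem : (fun _ : I => (1 : ℝ)) + (-e / d) • (Pi.single i 1 : I → ℝ) ∈ E := by
    refine hup _ hone _ fun j => ?_
    have : 0 ≤ (-e / d) * (Pi.single i 1 : I → ℝ) j := by
      refine mul_nonneg (div_nonneg (by linarith) hd0.le) ?_
      by_cases hij : j = i <;> simp [hij]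
    simpa using this
  have := hφ _ hmem
  rw [map_add, map_smul, ← hd, ← he, smul_eq_mul, div_mul_cancel₀ _ hd0.ne', map_zero] at this
  linarith

/-- Roberts' theorem: an onto choice rule satisfying positive association of differences is an
affine maximizer. -/
theorem PAD.exists_affine_maximizer [Fintype I] [Nonempty I] {f : (I → A → ℝ) → A} (hf : PAD f)
    (hs : Function.Surjective f) (h3 : ∀ x y : A, ∃ z, z ≠ x ∧ z ≠ y) [Nonempty A] :
    ∃ (k : I → ℝ) (C : A → ℝ), (∀ i, 0 ≤ k i) ∧ (∃ i, 0 < k i) ∧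
      ∀ v y, ∑ i, k i * v i y + C y ≤ ∑ i, k i * v i (f v) + C (f v) := by
  have hg : ∀ x y : A, ∃ g : ℝ, x ≠ y → ∀ r : ℝ, (fun _ => r) ∈ diffSet f x y ↔ g < r := by
    intro x y
    by_cases hxy : x = y
    · exact ⟨0, fun h => (h hxy).elim⟩
    · obtain ⟨g, hg⟩ := hf.exists_threshold hs hxy
      exact ⟨g, fun _ => hg⟩
  choose g hg using hg
  have hdual_le : ∀ x y, x ≠ y → g y x ≤ -g x y := by
    intro x y hxy
    refine le_of_forall_pos_lt_add fun ε hε => (hg y x hxy.symm _).1 ?_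
    exact hf.neg_add_mem_diffSet hs hxy (fun h => lt_irrefl _ ((hg x y hxy _).1 h)) hε
  have hanti : ∀ x y, x ≠ y → g y x = -g x y := by
    intro x y hxy
    refine le_antisymm (hdual_le x y hxy) ?_
    by_contra! hlt
    let r := (g x y - g y x) / 2
    have h1 : (fun _ => r) ∈ diffSet f x y := (hg x y hxy r).2 (by simp only [r]; linarith)
    have h2 : (fun _ => -r) ∈ diffSet f y x := (hg y x hxy.symm _).2 (by simp only [r]; linarith)
    obtain ⟨w, hw, hlt'⟩ := h2
    exact hf.ne_of_mem_diffSet hxy h1 (w := w) (fun i => by have := hlt' i; linarith) hw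
  have htri_le : ∀ x y z, x ≠ y → y ≠ z → x ≠ z → g x z ≤ g x y + g y z := by
    intro x y z hxy hyz hxz
    refine le_of_forall_pos_lt_add fun ε hε => (hg x z hxz _).1 ?_
    have := hf.add_mem_diffSet hs hxy hyz hxz ((hg x y hxy (g x y + ε / 2)).2 (by linarith))
      ((hg y z hyz (g y z + ε / 2)).2 (by linarith))
    exact diffSet_mono this fun i => by linarith
  have htri : ∀ x y z, x ≠ y → y ≠ z → x ≠ z → g x z = g x y + g y z := by
    intro x y z hxy hyz hxz
    refine le_antisymm (htri_le x y z hxy hyz hxz) ?_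
    have := htri_le z y x hyz.symm hxy.symm hxz.symm
    rw [hanti x y hxy, hanti y z hyz, hanti x z hxz] at this
    linarith
  let N : A → A → Set (I → ℝ) := fun x y => {α | (fun i => α i + g x y) ∈ diffSet f x y}
  have hright : ∀ x y z, x ≠ y → y ≠ z → x ≠ z → N x y ⊆ N x z := by
    intro x y z hxy hyz hxz α hα
    obtain ⟨ε, hε, h⟩ := exists_sub_mem_diffSet hα
    have := hf.add_mem_diffSet hs hxy hyz hxz h ((hg y z hyz (g y z + ε)).2 (by linarith))
    exact diffSet_mono this fun i => by rw [htri x y z hxy hyz hxz]; linarith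
  have hleft : ∀ x y z, x ≠ y → y ≠ z → x ≠ z → N y z ⊆ N x z := by
    intro x y z hxy hyz hxz α hα
    obtain ⟨ε, hε, h⟩ := exists_sub_mem_diffSet hα
    have := hf.add_mem_diffSet hs hxy hyz hxz ((hg x y hxy (g x y + ε)).2 (by linarith)) h
    exact diffSet_mono this fun i => by rw [htri x y z hxy hyz hxz]; linarith
  have hswap : ∀ x y, x ≠ y → N x y ⊆ N y x := by
    intro x y hxy
    obtain ⟨z, hzx, hzy⟩ := h3 x y
    exact (hright x y z hxy hzy.symm hzx.symm).trans <|
      (hleft y x z hxy.symm hzx.symm hzy.symm).trans (hright y z x hzy.symm hzx hxy.symm)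
  have hright' : ∀ x y z, x ≠ y → x ≠ z → N x y ⊆ N x z := by
    intro x y z hxy hxz
    by_cases hyz : y = z
    · rw [hyz]
    · exact hright x y z hxy hyz hxz
  have hall : ∀ x y x' y', x ≠ y → x' ≠ y' → N x y ⊆ N x' y' := by
    intro x y x' y' hxy hxy'
    by_cases h1 : x' = y
    · subst h1
      exact (hswap x x' hxy).trans (hright' x' x y' hxy.symm hxy')
    · refine Set.Subset.trans ?_ (hright' x' y y' h1 hxy')
      by_cases h2 : x' = x
      · rw [h2]
      · exact hleft x' x y h2 hxy h1
  obtain ⟨x₀⟩ := ‹Nonempty A›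
  obtain ⟨y₀, hy₀, -⟩ := h3 x₀ x₀
  obtain ⟨z₀, hzx₀, hzy₀⟩ := h3 x₀ y₀
  obtain ⟨k, hk0, hk⟩ := exists_nonneg_functional (N x₀ y₀)
    (fun α hα β h => diffSet_mono hα fun i => by linarith [h i])
    (fun α hα => by
      obtain ⟨ε, hε, h⟩ := exists_sub_mem_diffSet hα
      exact ⟨ε, hε, diffSet_mono h fun i => by linarith⟩)
    (fun α hα β hβ => by
      have h1 := hf.add_mem_diffSet hs hy₀.symm hzy₀.symm hzx₀.symm hα
        (hall x₀ y₀ y₀ z₀ hy₀.symm hzy₀.symm hβ)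
      refine hall x₀ z₀ x₀ y₀ hzx₀.symm hy₀.symm (diffSet_mono h1 fun i => ?_)
      rw [htri x₀ y₀ z₀ hy₀.symm hzy₀.symm hzx₀.symm]; linarith)
    (fun α hα ε hε => by
      refine hall y₀ x₀ x₀ y₀ hy₀ hy₀.symm ?_
      refine diffSet_mono (hf.neg_add_mem_diffSet hs hy₀.symm hα hε) fun i => ?_
      rw [hanti x₀ y₀ hy₀.symm]; linarith)
    (fun r => (hg x₀ y₀ hy₀.symm (r + g x₀ y₀)).trans (by simp))
  have hkpos : 0 < ∑ i, k i := by
    simpa using hk (fun _ => 1) ((hg x₀ y₀ hy₀.symm (1 + g x₀ y₀)).2 (by linarith))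
  obtain ⟨i₁, -, hi₁⟩ := Finset.exists_lt_of_sum_lt (f := fun _ => (0 : ℝ)) (g := k)
    (s := Finset.univ) (by simpa using hkpos)
  have hmain : ∀ v y, y ≠ f v → (∑ i, k i) * g (f v) y ≤ ∑ i, k i * (v i (f v) - v i y) := by
    intro v y hy
    refine le_of_forall_pos_le_add fun ε hε => ?_
    have hδ : 0 < ε / ∑ i, k i := div_pos hε hkpos
    have hmem : (fun i => v i (f v) - v i y + ε / (∑ i, k i) - g (f v) y) ∈ N (f v) y :=
      ⟨v, rfl, fun i => by linarith⟩
    have := hk _ (hall _ _ _ _ hy.symm hy₀.symm hmem)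
    have e1 : ∑ i, k i * (v i (f v) - v i y + ε / (∑ i, k i) - g (f v) y)
        = ∑ i, k i * (v i (f v) - v i y) + (∑ i, k i) * (ε / (∑ i, k i))
          - (∑ i, k i) * g (f v) y := by
      rw [Finset.sum_mul, Finset.sum_mul, ← Finset.sum_add_distrib, ← Finset.sum_sub_distrib]
      exact Finset.sum_congr rfl fun i _ => by ring
    rw [e1, mul_div_cancel₀ _ hkpos.ne'] at this
    linarith
  classical
  let c : A → ℝ := fun y => if y = x₀ then 0 else g x₀ y
  have hc : ∀ x y, x ≠ y → g x y = c y - c x := by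
    intro x y hxy
    by_cases hx : x = x₀
    · subst hx; simp [c, hxy.symm]
    · by_cases hy : y = x₀
      · subst hy; simp [c, hxy, hanti y x (Ne.symm hxy)]
      · simp only [c, hx, hy, if_false]
        rw [htri x₀ x y (Ne.symm hx) hxy (Ne.symm hy)]; ring
  refine ⟨k, fun y => (∑ i, k i) * c y, hk0, ⟨i₁, hi₁⟩, fun v y => ?_⟩
  by_cases hy : y = f v
  · rw [← hy]
  · have := hmain v y hy
    rw [hc _ _ (Ne.symm hy)] at this
    simp only [mul_sub, Finset.sum_sub_distrib] at this
    linarith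

/-! ### Willingness to pay -/

theorem minVal_le [Fintype A] [Nonempty A] (u : Util A) (a : A) : minVal u ≤ u a 0 :=
  Finset.inf'_le _ (Finset.mem_univ a)

theorem exists_eq_minVal [Fintype A] [Nonempty A] (u : Util A) : ∃ c, u c 0 = minVal u := by
  obtain ⟨c, -, hc⟩ := Finset.exists_mem_eq_inf' Finset.univ_nonempty (fun a => u a 0)
  exact ⟨c, hc.symm⟩

theorem apply_wtp [Fintype A] [Nonempty A] {u : Util A} (h1 : S1 u) (h2 : S2 u) (a : A) :
    u a (wtp u a) = minVal u := by
  obtain ⟨z, hz⟩ := h2 a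
  have hz0 : 0 ≤ z := ((h1 a).2.lt_iff_gt.1 (hz.trans_le (minVal_le u a))).le
  obtain ⟨p, -, hp⟩ := intermediate_value_Icc' hz0 (h1 a).1.continuousOn ⟨hz.le, minVal_le u a⟩
  have hset : {z : ℝ | u a z ≤ minVal u} = Set.Ici p := by
    ext s
    rw [Set.mem_ofPred_eq, Set.mem_Ici, ← hp, (h1 a).2.le_iff_ge]
  rw [wtp, hset, csInf_Ici, hp]

theorem minVal_le_apply_iff [Fintype A] [Nonempty A] {u : Util A} (h1 : S1 u) (h2 : S2 u) {a : A}
    {z : ℝ} : minVal u ≤ u a z ↔ z ≤ wtp u a := by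
  rw [← apply_wtp h1 h2 a, (h1 a).2.le_iff_ge]

theorem minVal_lt_apply_iff [Fintype A] [Nonempty A] {u : Util A} (h1 : S1 u) (h2 : S2 u) {a : A}
    {z : ℝ} : minVal u < u a z ↔ z < wtp u a := by
  rw [← apply_wtp h1 h2 a, (h1 a).2.lt_iff_gt]

theorem wtp_nonneg [Fintype A] [Nonempty A] {u : Util A} (h1 : S1 u) (h2 : S2 u) (a : A) :
    0 ≤ wtp u a :=
  (minVal_le_apply_iff h1 h2).1 (minVal_le u a)

theorem wtp_eq_zero [Fintype A] [Nonempty A] {u : Util A} (h1 : S1 u) (h2 : S2 u) {c : A}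
    (hc : u c 0 = minVal u) : wtp u c = 0 :=
  (h1 c).2.injective ((apply_wtp h1 h2 c).trans hc.symm)

/-- On payments that are individually rational without subsidies, a parallel type compares
outcomes as a quasi-linear agent with values `wtp u` does. -/
theorem IsParallel.wtp_sub_le [Fintype A] [Nonempty A] {u : Util A} (hu : IsParallel u) {a b : A}
    {za zb : ℝ} (hza : 0 ≤ za) (hza' : za ≤ wtp u a) (hzb : 0 ≤ zb) (h : u b zb ≤ u a za) :
    wtp u b - zb ≤ wtp u a - za := by
  obtain ⟨h1, h2, hp⟩ := hu
  by_cases hzb' : zb ≤ wtp u b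
  · rcases le_total (u b 0) (u a 0) with hab | hab
    · rw [← hp a b hab zb hzb hzb', (h1 a).2.le_iff_ge] at h
      linarith
    · rw [← hp b a hab za hza hza', (h1 b).2.le_iff_ge] at h
      linarith
  · linarith

/-- If a choice from every normalized price vector is utility maximizing for `u` and monotone in
price differences, then `u` is parallel. -/
theorem isParallel_of_monotone_choice [Fintype A] [Nonempty A] {u : Util A} (h1 : S1 u) (h2 : S2 u)
    (F : (A → ℝ) → A)
    (hF : ∀ π : A → ℝ, (∀ a, 0 ≤ π a) → (∃ c, π c = 0) → ∀ b, u b (π b) ≤ u (F π) (π (F π)))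
    (hmono : ∀ π π' : A → ℝ, π (F π) - π (F π') ≤ π' (F π) - π' (F π')) :
    IsParallel u := by
  classical
  obtain ⟨c, hc⟩ := exists_eq_minVal u
  have hwin : ∀ a b : A, a ≠ b → a ≠ c → b ≠ c → ∀ za zb : ℝ, 0 ≤ za → 0 ≤ zb →
      minVal u < u a za → u b zb < u a za →
      ∃ π : A → ℝ, π a = za ∧ π b = zb ∧ F π = a := by
    intro a b hab hac hbc za zb hza hzb hva hba
    let π : A → ℝ := fun d =>
      if d = a then za else if d = b then zb else if d = c then 0 else wtp u d + 1
    have hπa : π a = za := by simp [π]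
    have hπb : π b = zb := by simp [π, hab.symm]
    have hπc : π c = 0 := by simp [π, hac.symm, hbc.symm]
    have hπd : ∀ d, d ≠ a → d ≠ b → d ≠ c → π d = wtp u d + 1 :=
      fun d h1 h2 h3 => by simp [π, h1, h2, h3]
    have hnonneg : ∀ d, 0 ≤ π d := by
      intro d
      have := wtp_nonneg h1 h2 d
      simp only [π]
      split_ifs <;> linarith
    refine ⟨π, hπa, hπb, ?_⟩
    have hmax := hF π hnonneg ⟨c, hπc⟩ a
    rw [hπa] at hmax
    by_contra hne
    refine hmax.not_gt ?_
    by_cases hb : F π = b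
    · rw [hb, hπb]; exact hba
    · by_cases hc' : F π = c
      · rw [hc', hπc, hc]; exact hva
      · rw [hπd _ hne hb hc']
        refine lt_of_lt_of_le ?_ hva.le
        rw [← apply_wtp h1 h2 (F π)]
        exact (h1 _).2 (by linarith)
  have hdiff : ∀ a b : A, a ≠ b → a ≠ c → b ≠ c → ∀ za zb za' zb' : ℝ,
      0 ≤ za → 0 ≤ zb → 0 ≤ za' → 0 ≤ zb' → minVal u < u a za → u b zb < u a za →
      minVal u < u b zb' → u a za' < u b zb' → za - zb ≤ za' - zb' := by
    intro a b hab hac hbc za zb za' zb' hza hzb hza' hzb' hm hlt hm' hlt'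
    obtain ⟨π, hπa, hπb, hFπ⟩ := hwin a b hab hac hbc za zb hza hzb hm hlt
    obtain ⟨π', hπb', hπa', hFπ'⟩ := hwin b a hab.symm hbc hac zb' za' hzb' hza' hm' hlt'
    have := hmono π π'
    rwa [hFπ, hFπ', hπa, hπb, hπa', hπb'] at this
  refine ⟨h1, h2, fun a b hab z hz hzb => ?_⟩
  rcases hzb.eq_or_lt with hzb | hzb
  · rw [hzb, add_sub_cancel, apply_wtp h1 h2, apply_wtp h1 h2]
  have hvb : minVal u < u b z := (minVal_lt_apply_iff h1 h2).2 hzb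
  have hbc : b ≠ c := by
    rintro rfl
    rw [wtp_eq_zero h1 h2 hc] at hzb
    linarith
  have hb0 : u b z ≤ u b 0 := (h1 b).2.antitone hz
  have hac : a ≠ c := by
    rintro rfl
    linarith
  rcases eq_or_ne a b with rfl | hne
  · simp
  obtain ⟨y, ⟨hy0, hyp⟩, hy⟩ : ∃ y ∈ Set.Icc 0 (wtp u a), u a y = u b z := by
    refine intermediate_value_Icc' (wtp_nonneg h1 h2 a) (h1 a).1.continuousOn ⟨?_, hb0.trans hab⟩
    rw [apply_wtp h1 h2]; exact hvb.le
  have hpb : 0 < wtp u b := hz.trans_lt hzb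
  have hya : y < wtp u a := (minVal_lt_apply_iff h1 h2).1 (by rw [hy]; exact hvb)
  have hpa : 0 < wtp u a := hy0.trans_lt hya
  have hle : y - z ≤ wtp u a - wtp u b := by
    by_contra! hgap
    obtain ⟨δ, hδ0, hδ⟩ : ∃ δ > 0, δ ≤ wtp u b ∧ δ ≤ ((y - z) - (wtp u a - wtp u b)) / 4 :=
      ⟨min (wtp u b) (((y - z) - (wtp u a - wtp u b)) / 4), lt_min hpb (by linarith),
        min_le_left _ _, min_le_right _ _⟩
    have hm' : minVal u < u b (wtp u b - δ) := (minVal_lt_apply_iff h1 h2).2 (by linarith)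
    have := hdiff a b hne hac hbc y (z + δ) (wtp u a) (wtp u b - δ) hy0 (by linarith)
      hpa.le (by linarith) (by rw [hy]; exact hvb) (by rw [hy]; exact (h1 b).2 (by linarith))
      hm' (by rw [apply_wtp h1 h2]; exact hm')
    linarith
  have hge : wtp u a - wtp u b ≤ y - z := by
    by_contra! hgap
    obtain ⟨δ, hδ0, hδ⟩ : ∃ δ > 0, δ ≤ wtp u a ∧ δ ≤ ((wtp u a - wtp u b) - (y - z)) / 4 :=
      ⟨min (wtp u a) (((wtp u a - wtp u b) - (y - z)) / 4), lt_min hpa (by linarith),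
        min_le_left _ _, min_le_right _ _⟩
    have hm' : minVal u < u a (wtp u a - δ) := (minVal_lt_apply_iff h1 h2).2 (by linarith)
    have := hdiff a b hne hac hbc (wtp u a - δ) (wtp u b) (y + δ) z (by linarith) hpb.le
      (by linarith) hz hm' (by rw [apply_wtp h1 h2]; exact hm') hvb
      (by rw [← hy]; exact (h1 a).2 (by linarith))
    linarith
  rw [← hy]
  congr 1
  linarith

/-! ### Mechanisms on domains containing parallel types -/

/-- A DSIC, IR, no-subsidy mechanism together with a parallel type `par i v` of each agent `i` whose
willingness to pay equals `v` up to an additive constant. -/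
structure ParallelMech [Fintype A] [Nonempty A] [DecidableEq I] (U : I → Set (Util A))
    (x : (I → Util A) → A) (t : (I → Util A) → I → ℝ) (par : I → (A → ℝ) → Util A) : Prop where
  s1 : ∀ i, ∀ u ∈ U i, S1 u
  s2 : ∀ i, ∀ u ∈ U i, S2 u
  mem : ∀ i v, par i v ∈ U i
  parallel : ∀ i v, IsParallel (par i v)
  wtp_sub : ∀ i v a b, wtp (par i v) a - wtp (par i v) b = v a - v b
  dsic : DSIC U x t
  ir : IR U x t
  ns : NoSubsidy U t

theorem update_mem_domain [DecidableEq I] {U : I → Set (Util A)} {u : I → Util A}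
    (hu : ∀ j, u j ∈ U j) {i : I} {w : Util A} (hw : w ∈ U i) (j : I) :
    Function.update u i w j ∈ U j := by
  by_cases h : j = i
  · subst h; simpa using hw
  · simpa [h] using hu j

section Mech

variable [Fintype A] [Nonempty A] [DecidableEq I] {U : I → Set (Util A)}
  {x : (I → Util A) → A} {t : (I → Util A) → I → ℝ} {par : I → (A → ℝ) → Util A}

theorem ParallelMech.apply_le (h : ParallelMech U x t par) {u : I → Util A} (hu : ∀ j, u j ∈ U j)
    {i : I} {w w' : Util A} (hw : w ∈ U i) (hw' : w' ∈ U i) :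
    w (x (Function.update u i w')) (t (Function.update u i w') i) ≤
      w (x (Function.update u i w)) (t (Function.update u i w) i) := by
  simpa using h.dsic (Function.update u i w') (update_mem_domain hu hw') i w hw

theorem ParallelMech.payment_le_wtp (h : ParallelMech U x t par) {u : I → Util A}
    (hu : ∀ j, u j ∈ U j) {i : I} {w : Util A} (hw : w ∈ U i) :
    t (Function.update u i w) i ≤ wtp w (x (Function.update u i w)) :=
  (minVal_le_apply_iff (h.s1 i w hw) (h.s2 i w hw)).1 (h.ir u hu i w hw)

theorem ParallelMech.payment_eq (h : ParallelMech U x t par) {u : I → Util A} (hu : ∀ j, u j ∈ U j)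
    {i : I} {w w' : Util A} (hw : w ∈ U i) (hw' : w' ∈ U i)
    (hx : x (Function.update u i w) = x (Function.update u i w')) :
    t (Function.update u i w) i = t (Function.update u i w') i := by
  have h1 := h.apply_le hu hw hw'
  have h2 := h.apply_le hu hw' hw
  rw [hx] at h1 h2
  exact le_antisymm ((h.s1 i w hw _).2.le_iff_ge.1 h1) ((h.s1 i w' hw' _).2.le_iff_ge.1 h2)

theorem ParallelMech.sub_payment_le (h : ParallelMech U x t par) {u : I → Util A}
    (hu : ∀ j, u j ∈ U j) {i : I} {w : Util A} (hw : w ∈ U i) (v : A → ℝ) :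
    v (x (Function.update u i w)) - t (Function.update u i w) i ≤
      v (x (Function.update u i (par i v))) - t (Function.update u i (par i v)) i := by
  have h1 := (h.parallel i v).wtp_sub_le (h.ns _ (update_mem_domain hu (h.mem i v)) i)
    (h.payment_le_wtp hu (h.mem i v)) (h.ns _ (update_mem_domain hu hw) i)
    (h.apply_le hu (h.mem i v) hw)
  have h2 := h.wtp_sub i v (x (Function.update u i w)) (x (Function.update u i (par i v)))
  linarith

theorem ParallelMech.choice_eq_of_large (h : ParallelMech U x t par) {u : I → Util A}
    (hu : ∀ j, u j ∈ U j) {i : I} {v : A → ℝ} (hv : ∀ b, b ≠ x u → v b < v (x u) - t u i) :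
    x (Function.update u i (par i v)) = x u := by
  by_contra hne
  have h1 := h.sub_payment_le hu (hu i) v
  rw [Function.update_eq_self] at h1
  have h2 := h.ns _ (update_mem_domain hu (h.mem i v)) i
  have h3 := hv _ hne
  linarith

theorem ParallelMech.exists_choice_eq (h : ParallelMech U x t par) {u : I → Util A}
    (hu : ∀ j, u j ∈ U j) (i : I) (a : A) (ha : x u = a) :
    ∃ v, x (Function.update u i (par i v)) = a := by
  classical
  subst ha
  refine ⟨fun b => if b = x u then t u i + 1 else 0, h.choice_eq_of_large hu fun b hb => ?_⟩
  simp [hb]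

theorem ParallelMech.surjective [Fintype I] (h : ParallelMech U x t par) (hOnto : OntoMech U x) :
    Function.Surjective fun v : I → A → ℝ => x fun i => par i (v i) := by
  intro a
  have key : ∀ s : Finset I, ∃ u : I → Util A, (∀ j, u j ∈ U j) ∧ x u = a ∧
      ∀ i ∈ s, ∃ v, u i = par i v := by
    intro s
    induction s using Finset.induction_on with
    | empty =>
      obtain ⟨u, hu, hx⟩ := hOnto a
      exact ⟨u, hu, hx, by simp⟩
    | insert i s _ ih =>
      obtain ⟨u, hu, hx, hs⟩ := ih
      obtain ⟨v, hv⟩ := h.exists_choice_eq hu i a hx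
      refine ⟨_, update_mem_domain hu (h.mem i v), hv, fun j hj => ?_⟩
      by_cases hji : j = i
      · subst hji; exact ⟨v, by simp⟩
      · simpa [hji] using hs j (Finset.mem_of_mem_insert_of_ne hj hji)
  obtain ⟨u, -, hx, hv⟩ := key Finset.univ
  choose v hv using fun i => hv i (Finset.mem_univ i)
  exact ⟨v, by rw [← hx]; exact congrArg x (funext fun i => (hv i).symm)⟩

theorem ParallelMech.pad [Fintype I] (h : ParallelMech U x t par) :
    PAD fun v : I → A → ℝ => x fun i => par i (v i) := by
  intro v w a hv hlt
  have key : ∀ s : Finset I, x (fun i => par i (if i ∈ s then w i else v i)) = a := by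
    intro s
    induction s using Finset.induction_on with
    | empty => simpa using hv
    | insert j s hj ih =>
      let u : I → Util A := fun i => par i (if i ∈ s then w i else v i)
      have hu : ∀ i, u i ∈ U i := fun i => h.mem i _
      have e1 : Function.update u j (par j (v j)) = u := by
        rw [Function.update_eq_self_iff]; simp [u, hj]
      have e2 : (fun i => par i (if i ∈ insert j s then w i else v i)) =
          Function.update u j (par j (w j)) := by
        funext i
        by_cases hij : i = j
        · subst hij; simp
        · simp [u, hij]
      rw [e2]
      by_contra hne
      have h1 := h.sub_payment_le hu (h.mem j (w j)) (v j)
      have h2 := h.sub_payment_le hu (h.mem j (v j)) (w j)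
      rw [e1] at h1 h2
      rw [show x u = a from ih] at h1 h2
      have := hlt j _ hne
      linarith
  simpa using key Finset.univ

/-- If handicaps `c` decide the choice for the parallel types of agent `i`, then agent `i` faces
the prices `max c - c`. -/
theorem ParallelMech.exists_prices (h : ParallelMech U x t par) {u : I → Util A}
    (hu : ∀ j, u j ∈ U j) (i : I) (c : A → ℝ)
    (hc : ∀ (w : A → ℝ) (a : A), (∀ b, b ≠ a → w b + c b < w a + c a) →
      x (Function.update u i (par i w)) = a) :
    ∃ m, (∀ a, c a ≤ c m) ∧ ∀ w ∈ U i,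
      (∀ b, w b (c m - c b) ≤
        w (x (Function.update u i w)) (c m - c (x (Function.update u i w)))) ∧
      t (Function.update u i w) i = c m - c (x (Function.update u i w)) := by
  classical
  let W : ℝ → A → A → ℝ := fun ε a b => if b = a then ε - c a else - c b
  have hW : ∀ ε > 0, ∀ a, x (Function.update u i (par i (W ε a))) = a := by
    intro ε hε a
    refine hc _ _ fun b hb => ?_
    simp [W, hb, hε]
  let τ : A → ℝ := fun a => t (Function.update u i (par i (W 1 a))) i
  have hτ : ∀ w ∈ U i, t (Function.update u i w) i = τ (x (Function.update u i w)) := by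
    intro w hw
    exact h.payment_eq hu hw (h.mem i _) (hW 1 one_pos _).symm
  have hle : ∀ a b, τ a + c a ≤ τ b + c b := by
    intro a b
    by_cases hab : b = a
    · rw [hab]
    refine le_of_forall_pos_le_add fun ε hε => ?_
    have h1 := h.sub_payment_le hu (h.mem i (W 1 b)) (W ε a)
    rw [hτ _ (h.mem i (W 1 b)), hτ _ (h.mem i (W ε a)), hW 1 one_pos, hW ε hε] at h1
    have e1 : W ε a b = - c b := by simp [W, hab]
    have e2 : W ε a a = ε - c a := by simp [W]
    rw [e1, e2] at h1
    linarith
  set m := x (Function.update u i (par i 0)) with hm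
  have hpar := h.parallel i 0
  have hτm : τ m = 0 := by
    rw [hm, ← hτ _ (h.mem i 0)]
    refine le_antisymm ?_ (h.ns _ (update_mem_domain hu (h.mem i 0)) i)
    refine (h.payment_le_wtp hu (h.mem i 0)).trans ?_
    obtain ⟨d, hd⟩ := exists_eq_minVal (par i 0)
    have h1 := h.wtp_sub i 0 (x (Function.update u i (par i 0))) d
    rw [wtp_eq_zero hpar.1 hpar.2.1 hd] at h1
    simpa using h1.le
  have hprice : ∀ a, c m - c a = τ a := by
    intro a
    have h1 := hle a m
    have h2 := hle m a
    linarith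
  refine ⟨m, fun a => ?_, fun w hw => ⟨fun b => ?_, ?_⟩⟩
  · have h1 : 0 ≤ τ a := h.ns _ (update_mem_domain hu (h.mem i _)) i
    linarith [hprice a]
  · rw [hprice, hprice, ← hτ w hw]
    have h1 := h.apply_le hu hw (h.mem i (W 1 b))
    rwa [hW 1 one_pos] at h1
  · rw [hτ w hw, hprice]

/-- If two agents have positive weight in the affine maximizer on parallel types, then all types
of each of them are parallel. -/
theorem ParallelMech.isParallel_of_two_weights [Fintype I] (h : ParallelMech U x t par)
    {k : I → ℝ} {C : A → ℝ}
    (hmax : ∀ (v : I → A → ℝ) (y : A), ∑ i, k i * v i y + C y ≤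
      ∑ i, k i * v i (x fun i => par i (v i)) + C (x fun i => par i (v i)))
    {i j : I} (hij : i ≠ j) (hi : 0 < k i) (hj : 0 < k j) {w : Util A} (hw : w ∈ U i) :
    IsParallel w := by
  let base : I → Util A := fun l => par l 0
  have hbase : ∀ l, base l ∈ U l := fun l => h.mem l 0
  let V : (A → ℝ) → A → ℝ := fun π a => (-(k i * π a) - C a) / k j
  have hV : ∀ π a, k j * V π a = -(k i * π a) - C a := fun π a => mul_div_cancel₀ _ hj.ne'
  let F : (A → ℝ) → A := fun π =>
    x (Function.update (Function.update base j (par j (V π))) i w)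
  refine isParallel_of_monotone_choice (h.s1 i w hw) (h.s2 i w hw) F ?_ ?_
  · rintro π hπ ⟨c, hc⟩ b
    have hu := update_mem_domain hbase (h.mem j (V π))
    obtain ⟨m, hm, hprice⟩ := h.exists_prices hu i (fun a => -π a) (by
      intro r a hr
      let P : I → A → ℝ := fun l y => (if l = i then r y else 0) + (if l = j then V π y else 0)
      have hP : Function.update (Function.update base j (par j (V π))) i (par i r) =
          fun l => par l (P l) := by
        funext l
        by_cases hli : l = i
        · subst hli
          have : P l = r := by funext y; simp [P, hij]
          simp [this]
        · by_cases hlj : l = j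
          · subst hlj
            have : P l = V π := by funext y; simp [P, hli]
            simp [this, hli]
          · have : P l = 0 := by funext y; simp [P, hli, hlj]
            simp [this, hli, hlj, base]
      have hsum : ∀ y, ∑ l, k l * P l y = k i * r y + k j * V π y := by
        intro y
        simp [P, mul_add, Finset.sum_add_distrib]
      rw [hP]
      by_contra hne
      have h1 := hmax P a
      rw [hsum, hsum, hV, hV] at h1
      have h2 := mul_lt_mul_of_pos_left (hr _ hne) hi
      linarith)
    have hm0 : π m = 0 := by
      have h1 := hm c
      rw [hc] at h1
      linarith [hπ m]
    have := (hprice w hw).1 b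
    simpa [hm0] using this
  · intro π π'
    have hu := update_mem_domain hbase hw
    have h1 := h.sub_payment_le hu (h.mem j (V π')) (V π)
    have h2 := h.sub_payment_le hu (h.mem j (V π)) (V π')
    have e : ∀ π, x (Function.update (Function.update base i w) j (par j (V π))) = F π :=
      fun π => by rw [Function.update_comm hij]
    rw [e, e] at h1 h2
    have h3 := mul_le_mul_of_nonneg_left (add_le_add h1 h2) hj.le
    simp only [mul_add, mul_sub, hV] at h3
    have h4 : k i * (π (F π) - π (F π')) ≤ k i * (π' (F π) - π' (F π')) := by linarith
    exact le_of_mul_le_mul_left h4 hi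

/-- If agent `i` alone decides the choice on parallel profiles, then she does so on all profiles
where her own type is parallel. -/
theorem ParallelMech.choice_eq_of_decisive [Fintype I] (h : ParallelMech U x t par) {i : I}
    {c : A → ℝ}
    (hdec : ∀ (v : I → A → ℝ) (a : A), (∀ b, b ≠ a → v i b + c b < v i a + c a) →
      x (fun l => par l (v l)) = a)
    {u : I → Util A} (hu : ∀ j, u j ∈ U j) {w : A → ℝ} {a : A}
    (hw : ∀ b, b ≠ a → w b + c b < w a + c a) : x (Function.update u i (par i w)) = a := by
  have key : ∀ s : Finset I, ∀ u : I → Util A, (∀ j, u j ∈ U j) → u i = par i w →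
      (∀ j ∉ s, ∃ v, u j = par j v) → x u = a := by
    intro s
    induction s using Finset.induction_on with
    | empty =>
      intro u _ hui hpar
      choose v hv using fun j => hpar j (by simp)
      have e : u = fun l => par l (Function.update v i w l) := by
        funext l
        by_cases hl : l = i
        · subst hl; simp [hui]
        · simp [hl, ← hv]
      rw [e]
      exact hdec _ a (by simpa using hw)
    | insert j s _ ih =>
      intro u hu hui hpar
      by_cases hji : j = i
      · subst hji
        refine ih u hu hui fun l hl => ?_
        by_cases hlj : l = j
        · subst hlj; exact ⟨w, hui⟩
        · exact hpar l (by simp [hl, hlj])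
      · obtain ⟨v, hv⟩ := h.exists_choice_eq hu j (x u) rfl
        rw [← hv]
        refine ih _ (update_mem_domain hu (h.mem j v)) (by simp [Ne.symm hji, hui]) fun l hl => ?_
        by_cases hlj : l = j
        · subst hlj; exact ⟨v, by simp⟩
        · simpa [hlj] using hpar l (by simp [hl, hlj])
  refine key Finset.univ _ (update_mem_domain hu (h.mem i w)) (by simp) (by simp)

end Mech

theorem exists_wtp_sub_eq [Fintype A] [Nonempty A] {D : Set (Util A)} (hD : UnrestrictedWTP D)
    (v : A → ℝ) : ∃ u ∈ D, ∀ a b, wtp u a - wtp u b = v a - v b := by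
  obtain ⟨m, hm⟩ := Finite.exists_min v
  obtain ⟨u, hu, hwtp⟩ := hD (fun a => v a - v m) (fun a => sub_nonneg.2 (hm a)) ⟨m, sub_self _⟩
  exact ⟨u, hu, fun a b => by rw [hwtp, hwtp]; ring⟩

/-- Main dictatorship theorem. With `|A| ≥ 3`, if each `U i` contains
an unrestricted parallel domain (C1) and at least `n−1` agents have some non-parallel
type (C2), then every DSIC, deterministic, onto, IR, no-subsidy mechanism is a fixed
price dictatorship. -/
theorem dictatorship
    [Fintype A] [Nonempty A] [Fintype I] [DecidableEq I]
    (hA : 3 ≤ Fintype.card A)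
    (U : I → Set (Util A))
    (hS : ∀ i, ∀ u ∈ U i, S1 u ∧ S2 u)
    -- (C1): each `U i` contains an unrestricted parallel domain
    (hC1 : ∀ i, ∃ D : Set (Util A), D ⊆ U i ∧ (∀ u ∈ D, IsParallel u) ∧ UnrestrictedWTP D)
    -- (C2): at most one agent has all her types parallel
    (hC2 : ∀ i j : I, i ≠ j →
      (∃ u ∈ U i, ¬ IsParallel u) ∨ (∃ u ∈ U j, ¬ IsParallel u))
    (x : (I → Util A) → A) (t : (I → Util A) → I → ℝ)
    (hDSIC : DSIC U x t) (hOnto : OntoMech U x)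
    (hIR : IR U x t) (hNS : NoSubsidy U t) :
    ∃ (istar : I) (z : A → ℝ), ∀ u : I → Util A, (∀ j, u j ∈ U j) →
      (∀ a : A, u istar a (z a) ≤ u istar (x u) (z (x u))) ∧ t u istar = z (x u) := by
  choose D hDU hDpar hDwtp using hC1
  choose par hparD hpar_sub using fun i v => exists_wtp_sub_eq (hDwtp i) v
  have h : ParallelMech U x t par :=
    { s1 := fun i u hu => (hS i u hu).1
      s2 := fun i u hu => (hS i u hu).2
      mem := fun i v => hDU i (hparD i v)
      parallel := fun i v => hDpar i _ (hparD i v)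
      wtp_sub := hpar_sub
      dsic := hDSIC
      ir := hIR
      ns := hNS }
  have hthird : ∀ a b : A, ∃ d, d ≠ a ∧ d ≠ b := by
    classical
    intro a b
    obtain ⟨d, -, hd⟩ := Finset.exists_mem_notMem_of_card_lt_card
      (s := {a, b}) (t := (Finset.univ : Finset A))
      (lt_of_le_of_lt Finset.card_le_two (by rw [Finset.card_univ]; omega))
    simp only [Finset.mem_insert, Finset.mem_singleton, not_or] at hd
    exact ⟨d, hd⟩
  have hI : Nonempty I := by
    by_contra hempty
    rw [not_nonempty_iff] at hempty
    obtain ⟨a⟩ := ‹Nonempty A›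
    obtain ⟨b, hb, -⟩ := hthird a a
    obtain ⟨u, -, hu⟩ := hOnto a
    obtain ⟨u', -, hu'⟩ := hOnto b
    exact hb (by rw [← hu, ← hu', Subsingleton.elim u u'])
  obtain ⟨k, C, hk0, ⟨i, hi⟩, hmax⟩ :=
    h.pad.exists_affine_maximizer (h.surjective hOnto) hthird
  have hk : ∀ j, j ≠ i → k j = 0 := by
    intro j hji
    by_contra hj
    have hj : 0 < k j := lt_of_le_of_ne (hk0 j) (Ne.symm hj)
    rcases hC2 i j hji.symm with ⟨w, hw, hnot⟩ | ⟨w, hw, hnot⟩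
    · exact hnot (h.isParallel_of_two_weights hmax hji.symm hi hj hw)
    · exact hnot (h.isParallel_of_two_weights hmax hji hj hi hw)
  have hsum : ∀ (v : I → A → ℝ) (y : A), ∑ l, k l * v l y = k i * v i y := fun v y =>
    Finset.sum_eq_single_of_mem i (Finset.mem_univ i) fun l _ hl => by rw [hk l hl, zero_mul]
  have hdec : ∀ (v : I → A → ℝ) (a : A), (∀ b, b ≠ a → v i b + C b / k i < v i a + C a / k i) →
      x (fun l => par l (v l)) = a := by
    intro v a hlt
    by_contra hne
    have h1 := hmax v a
    rw [hsum, hsum] at h1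
    have h2 := mul_lt_mul_of_pos_left (hlt _ hne) hi
    rw [mul_add, mul_add, mul_div_cancel₀ _ hi.ne', mul_div_cancel₀ _ hi.ne'] at h2
    linarith
  obtain ⟨m₀, hm₀⟩ := Finite.exists_max fun a => C a / k i
  refine ⟨i, fun a => C m₀ / k i - C a / k i, fun u hu => ?_⟩
  obtain ⟨m, hm, hprice⟩ := h.exists_prices hu i (fun a => C a / k i)
    fun w a hw => h.choice_eq_of_decisive hdec hu hw
  have hmm : C m / k i = C m₀ / k i := le_antisymm (hm₀ m) (hm m₀)
  have := hprice (u i) (hu i)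
  simpa only [Function.update_eq_self, hmm] using this
end NQLSC
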